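/- Every closed subspace of a charming space is a charming space; that is, if X is a charming topological space and A is a closed subset of X, then A with the subspace topology is a charming space. -/

import Mathlib

open Set Function TopologicalSpace

universe u

/-- A map between topological spaces is *perfect* if it is continuous, closed, and
every fiber is compact. -/
def PerfectMap {Y : Type*} {Z : Type*} [TopologicalSpace Y] [TopologicalSpace Z]
    (f : Y → Z) : Prop :=
  Continuous f ∧ IsClosedMap f ∧ ∀ z : Z, IsCompact (f ⁻¹' {z})

/-- A topological space `X` is a *Lindelöf Σ-space* if there exist a topological space `Y`,
a continuous surjection from `Y` onto `X`, and a perfect surjection from `Y` onto some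
second-countable space. -/
def IsLindelofSigma (X : Type u) [TopologicalSpace X] : Prop :=
  ∃ (Y : Type u) (tY : TopologicalSpace Y) (Z : Type u) (tZ : TopologicalSpace Z),
    @SecondCountableTopology Z tZ ∧
    (∃ f : Y → X, @Continuous Y X tY _ f ∧ Surjective f) ∧
    (∃ g : Y → Z, @PerfectMap Y Z tY tZ g ∧ Surjective g)

/-- A topological space `X` is a *charming space* if there is a subset `Y` of `X` that is a
Lindelöf Σ-space in the subspace topology and such that for every open `U ⊇ Y`,
the set `X \ U` is a Lindelöf Σ-space in the subspace topology. -/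
def IsCharming (X : Type u) [TopologicalSpace X] : Prop :=
  ∃ Y : Set X, IsLindelofSigma Y ∧
    ∀ U : Set X, IsOpen U → Y ⊆ U → IsLindelofSigma ↥(Uᶜ)

/-- A *CL-charming* space: the shell `Y` can be chosen closed. -/
def IsCLCharming (X : Type u) [TopologicalSpace X] : Prop :=
  ∃ Y : Set X, IsClosed Y ∧ IsLindelofSigma Y ∧
    ∀ U : Set X, IsOpen U → Y ⊆ U → IsLindelofSigma ↥(Uᶜ)

/-- A *CO-charming* space: the shell `Y` can be chosen compact. -/
def IsCOCharming (X : Type u) [TopologicalSpace X] : Prop :=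
  ∃ Y : Set X, IsCompact Y ∧ IsLindelofSigma Y ∧
    ∀ U : Set X, IsOpen U → Y ⊆ U → IsLindelofSigma ↥(Uᶜ)

/-- A space has a *countable network* if there is a countable family `N` of subsets such that
every point in every open set `V` is contained in a member of `N` contained in `V`. -/
def HasCountableNetwork (X : Type u) [TopologicalSpace X] : Prop :=
  ∃ N : Set (Set X), N.Countable ∧
    ∀ x : X, ∀ V : Set X, IsOpen V → x ∈ V → ∃ n ∈ N, x ∈ n ∧ n ⊆ V

/-- A topological space `X` is *weak (4,4)-structured* if there exist a topological space `Y`,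
a continuous surjection from `Y` onto `X`, and a perfect surjection from `Y` onto some
charming space. -/
def IsWeak44Structured (X : Type u) [TopologicalSpace X] : Prop :=
  ∃ (Y : Type u) (tY : TopologicalSpace Y) (M : Type u) (tM : TopologicalSpace M),
    @IsCharming M tM ∧
    (∃ f : Y → X, @Continuous Y X tY _ f ∧ Surjective f) ∧
    (∃ g : Y → M, @PerfectMap Y M tY tM g ∧ Surjective g)

/-!
A Lindelöf Σ-structure on `X`, given by `f : Y → X` and `g : Y → Z`, pulls back along a closed
embedding `e : B → X` by restricting `f` and `g` to the closed set `f ⁻¹' range e`. If `S` is a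
shell of `X`, then `e ⁻¹' S` is a shell of `B`: an open `U ⊇ e ⁻¹' S` satisfies
`Uᶜ = e ⁻¹' (e '' Uᶜ)`, where `e '' Uᶜ` is a closed subset of `X` disjoint from `S`.
-/

open Topology

theorem perfectMap_iff_isProperMap {Y Z : Type*} [TopologicalSpace Y] [TopologicalSpace Z]
    {g : Y → Z} : PerfectMap g ↔ IsProperMap g :=
  isProperMap_iff_isClosedMap_and_compact_fibers.symm

theorem PerfectMap.imageFactorization {Y Z : Type*} [TopologicalSpace Y] [TopologicalSpace Z]
    {g : Y → Z} (hg : PerfectMap g) {C : Set Y} (hC : IsClosed C) :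
    PerfectMap (C.imageFactorization g) := by
  rw [perfectMap_iff_isProperMap] at hg ⊢
  have hgC : IsProperMap fun y : C ↦ g y := hg.restrict hC
  exact isProperMap_of_comp_of_inj (hgC.continuous.subtype_mk _) continuous_subtype_val hgC
    Subtype.val_injective

theorem IsLindelofSigma.of_isClosedEmbedding {X B : Type u} [TopologicalSpace X]
    [TopologicalSpace B] (hX : IsLindelofSigma X) {e : B → X} (he : IsClosedEmbedding e) :
    IsLindelofSigma B := by
  obtain ⟨Y, _, Z, _, _, ⟨f, hf, hf_surj⟩, g, hg, -⟩ := hX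
  let C : Set Y := f ⁻¹' range e
  have hC : IsClosed C := he.isClosed_range.preimage hf
  let φ : B ≃ₜ range e := he.isEmbedding.toHomeomorph
  exact ⟨C, inferInstance, g '' C, inferInstance, inferInstance,
    ⟨φ.symm ∘ (range e).restrictPreimage f, φ.symm.continuous.comp hf.restrictPreimage,
      φ.symm.surjective.comp (hf_surj.restrictPreimage _)⟩,
    C.imageFactorization g, hg.imageFactorization hC, imageFactorization_surjective⟩

theorem closed_subspace_of_charming_general {X B : Type u} [TopologicalSpace X]
    [TopologicalSpace B] (hX : IsCharming X) {e : B → X} (he : IsClosedEmbedding e) :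
    IsCharming B := by
  obtain ⟨S, hS, hS_compl⟩ := hX
  refine ⟨e ⁻¹' S, hS.of_isClosedEmbedding (he.restrictPreimage S), fun U hU hSU ↦ ?_⟩
  let V : Set X := (e '' Uᶜ)ᶜ
  have hV : IsOpen V := (he.isClosedMap _ hU.isClosed_compl).isOpen_compl
  have hSV : S ⊆ V := by
    rintro _ hbS ⟨b, hbU, rfl⟩
    exact hbU (hSU hbS)
  have h_preimage : e ⁻¹' Vᶜ = Uᶜ := by
    rw [compl_compl, preimage_image_eq _ he.injective]
  rw [← h_preimage]
  exact (hS_compl V hV hSV).of_isClosedEmbedding (he.restrictPreimage Vᶜ)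

/-- Every closed subspace of a charming space is a charming space. -/
theorem closed_subspace_of_charming {X : Type u} [TopologicalSpace X] [T35Space X]
    (hX : IsCharming X) (A : Set X) (hA : IsClosed A) :
    IsCharming A :=
  closed_subspace_of_charming_general hX hA.isClosedEmbedding_subtypeVal
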